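/- arXiv:0909.3388 — 2 statements merged into one kernel-verified Lean document; each statement's English description precedes it below -/
import Mathlib

section
/- Let d_N denote the number of undesirable parameters n with 2 ≤ n ≤ N. Then limsup_{N→∞} d_N/N ≥ (5·r_sup(b) − 2)/3, where b = b_1 b_2 b_3 ⋯ is the infinite binary word of binary digits of the fractional part of √2 and r_sup(b) = limsup_{n→∞} |Z(b^(n))|/n. In particular, if r_sup(b) > 2/5, then there exist infinitely many undesirable parameters. -/
/-!
Put `n = k + 2` and `a = ⌊2 ^ k √2⌋`. With `x = 2 ^ (k + 1) + a` one has
`x (2 ^ n - x) = 4 ^ (k + 1) - a ^ 2`, so `L_n(x) = 2 ^ (n - 1)` amounts to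
`2 * 4 ^ k - 2 ^ k < a ^ 2 ≤ 2 * 4 ^ k`. This holds as soon as the fractional part of `2 ^ k √2`,
whose binary expansion is `0.b_{k+1} b_{k+2} ⋯`, is less than `11 / 32`, because
`(11 / 32) * 2√2 < 1`. Hence `n` is undesirable whenever one of `00`, `0100`, `01010` starts at the
digit `b_{k+1}` (`undesirable_of_goodAt`).

It remains to count such positions. For any infinite binary word, let `Z` be the number of zeroes
and `G` the number of pattern occurrences starting among the first `N` letters. Then
`5 Z ≤ 3 G + 2 N + 4` (`five_zeros_le`). Indeed, let a letter `1` weigh `2`, a zero that starts a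
pattern `0`, and any other zero `-3`. A bounded potential depending on the next few letters shows
that all partial sums of the weights are at least `-4`. Since `G ≤ d_N + 1`, dividing by `N` and
passing to the upper limit gives the bound. If only finitely many parameters were undesirable, then
`d_N / N → 0`, so the bound would force `5 r_sup - 2 ≤ 0`.
-/

open Filter

/-- `patternAt w i` means the 1-based index `i ≥ 2` in the finite binary word `w`
(`false` = 0, `true` = 1) is a member of the set `P(w)`: one of the patterns
`00`, `0100`, `01010` occurs starting at position `i-1` (1-based) and fits in `w`. -/
def patternAt (w : List Bool) (i : ℕ) : Prop :=
  2 ≤ i ∧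
    ([false, false] <+: w.drop (i - 2) ∨
     [false, true, false, false] <+: w.drop (i - 2) ∨
     [false, true, false, true, false] <+: w.drop (i - 2))

instance (w : List Bool) : DecidablePred (patternAt w) := fun i => by
  unfold patternAt; infer_instance

/-- The set `P(w)` of indices, as a `Finset`. -/
def Pset (w : List Bool) : Finset ℕ :=
  (Finset.range (w.length + 1)).filter (patternAt w)

/-- `|P(w)|`. -/
def Pcount (w : List Bool) : ℕ := (Pset w).card

/-- `|Z(w)|`: the number of zeroes in `w`. -/
def Zcount (w : List Bool) : ℕ := w.count false

/-- The initial subword `w^(n)` of an infinite binary word `w = w_1 w_2 w_3 ⋯`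
(indexed so that `w k` is the letter `w_{k+1}`). -/
def prefixWord (w : ℕ → Bool) (n : ℕ) : List Bool := List.ofFn (fun k : Fin n => w k)

noncomputable def rinf (w : ℕ → Bool) : ℝ :=
  liminf (fun n : ℕ => (Zcount (prefixWord w n) : ℝ) / n) atTop

noncomputable def rsup (w : ℕ → Bool) : ℝ :=
  limsup (fun n : ℕ => (Zcount (prefixWord w n) : ℝ) / n) atTop

noncomputable def Rinf (w : ℕ → Bool) : ℝ :=
  liminf (fun n : ℕ => (Pcount (prefixWord w n) : ℝ) / n) atTop

noncomputable def Rsup (w : ℕ → Bool) : ℝ :=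
  limsup (fun n : ℕ => (Pcount (prefixWord w n) : ℝ) / n) atTop

/-- The integer-valued logistic map `L_n(x) = ⌊x(2^n − x)/2^{n−2}⌋` (for `x ≤ 2^n`,
natural-number division is exactly the floor of the real quotient). -/
def Ln (n x : ℕ) : ℕ := x * (2 ^ n - x) / 2 ^ (n - 2)

/-- A parameter `n ≥ 2` is *undesirable* if some `x ∈ X_n = {1, …, 2^n − 1}`
satisfies `L_n(x) = 2^{n−1}`. -/
def Undesirable (n : ℕ) : Prop :=
  ∃ x ∈ Finset.Icc 1 (2 ^ n - 1), Ln n x = 2 ^ (n - 1)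

instance : DecidablePred Undesirable := fun n => by
  unfold Undesirable; infer_instance

/-- The `i`-th binary digit `b_i = ⌊2^i √2⌋ mod 2` of the fractional part of `√2`. -/
noncomputable def sqrt2digit (i : ℕ) : ℤ := ⌊(2 : ℝ) ^ i * Real.sqrt 2⌋ % 2

/-- The infinite binary word `b = b_1 b_2 b_3 ⋯` of binary digits of the fractional
part of `√2`, indexed so that `bword k` is the digit `b_{k+1}`. -/
noncomputable def bword : ℕ → Bool := fun k => decide (sqrt2digit (k + 1) = 1)

/-- `d_N`: the number of undesirable parameters `n` with `2 ≤ n ≤ N`. -/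
def numUndesirable (N : ℕ) : ℕ :=
  ((Finset.Icc 2 N).filter (fun n => Undesirable n)).card

/-- One of the patterns `00`, `0100`, `01010` starts at position `k` (0-based) of the infinite
word `w`. Unlike for `patternAt`, there is no condition that the pattern fit in a given prefix. -/
def GoodAt (w : ℕ → Bool) (k : ℕ) : Prop :=
  w k = false ∧ (w (k + 1) = false ∨
    (w (k + 1) = true ∧ w (k + 2) = false ∧
      (w (k + 3) = false ∨ (w (k + 3) = true ∧ w (k + 4) = false))))

instance (w : ℕ → Bool) : DecidablePred (GoodAt w) := fun k => by
  unfold GoodAt; infer_instance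

/-- The potential used to count patterns, as a function of the next four letters: a lower bound for
every sum of weights of consecutive letters starting here, where `1` weighs `2`, a zero starting a
pattern weighs `0`, and any other zero weighs `-3`. -/
def potential (a b c d : Bool) : ℤ :=
  match a, b, c, d with
  | false, true, true, _ => -3
  | false, _, _, _ => -4
  | true, false, true, true => -1
  | true, false, _, _ => -2
  | true, true, _, _ => 0

lemma potential_step (w : ℕ → Bool) (k : ℕ) :
    potential (w k) (w (k + 1)) (w (k + 2)) (w (k + 3)) ≤
      (3 * (if GoodAt w k then 1 else 0) - 5 * (if w k = false then 1 else 0) + 2) +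
      potential (w (k + 1)) (w (k + 2)) (w (k + 3)) (w (k + 4)) := by
  have key : ∀ a b c d e : Bool, potential a b c d ≤
      (3 * (if a = false ∧ (b = false ∨ (b = true ∧ c = false ∧
        (d = false ∨ (d = true ∧ e = false)))) then 1 else 0)
        - 5 * (if a = false then 1 else 0) + 2) + potential b c d e := by decide
  convert key (w k) (w (k + 1)) (w (k + 2)) (w (k + 3)) (w (k + 4)) using 6
  exact Iff.rfl

lemma five_zeros_le (w : ℕ → Bool) (N : ℕ) :
    5 * ((Finset.range N).filter (fun k => w k = false)).card ≤
      3 * ((Finset.range N).filter (GoodAt w)).card + 2 * N + 4 := by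
  have key : potential (w 0) (w 1) (w 2) (w 3) ≤
      3 * (((Finset.range N).filter (GoodAt w)).card : ℤ)
        - 5 * ((Finset.range N).filter (fun k => w k = false)).card + 2 * N
        + potential (w N) (w (N + 1)) (w (N + 2)) (w (N + 3)) := by
    induction N with
    | zero => simp
    | succ N ih =>
      have h := potential_step w N
      simp only [Finset.card_filter, Finset.sum_range_succ] at ih ⊢
      push_cast at ih ⊢
      linarith
  have lower : ∀ a b c d, -4 ≤ potential a b c d := by decide
  have upper : ∀ a b c d, potential a b c d ≤ 0 := by decide
  have h1 := lower (w 0) (w 1) (w 2) (w 3)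
  have h2 := upper (w N) (w (N + 1)) (w (N + 2)) (w (N + 3))
  omega

lemma Zcount_prefixWord (w : ℕ → Bool) (N : ℕ) :
    Zcount (prefixWord w N) = ((Finset.range N).filter (fun k => w k = false)).card := by
  induction N with
  | zero => simp [Zcount, prefixWord]
  | succ N ih =>
    unfold Zcount prefixWord at ih ⊢
    rw [List.ofFn_succ_last, List.count_append, Finset.card_filter, Finset.sum_range_succ,
      ← Finset.card_filter]
    simp only [Fin.val_castSucc, Fin.val_last]
    rw [ih]
    cases w N <;> simp

lemma floor_succ (i : ℕ) :
    ⌊(2 : ℝ) ^ (i + 1) * √2⌋ = 2 * ⌊(2 : ℝ) ^ i * √2⌋ + if bword i = true then 1 else 0 := by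
  have e : (2 : ℝ) ^ (i + 1) * √2 = 2 * (2 ^ i * √2) := by ring
  have h1 := Int.floor_le ((2 : ℝ) ^ i * √2)
  have h2 := Int.lt_floor_add_one ((2 : ℝ) ^ i * √2)
  have lo : 2 * ⌊(2 : ℝ) ^ i * √2⌋ ≤ ⌊(2 : ℝ) ^ (i + 1) * √2⌋ := by
    rw [Int.le_floor, e]; push_cast; linarith
  have hi : ⌊(2 : ℝ) ^ (i + 1) * √2⌋ < 2 * ⌊(2 : ℝ) ^ i * √2⌋ + 2 := by
    rw [Int.floor_lt, e]; push_cast; linarith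
  by_cases h : bword i = true
  · have h' : ⌊(2 : ℝ) ^ (i + 1) * √2⌋ % 2 = 1 := of_decide_eq_true h
    rw [if_pos h]; omega
  · have h' : ¬ ⌊(2 : ℝ) ^ (i + 1) * √2⌋ % 2 = 1 := fun e => h (decide_eq_true e)
    rw [if_neg h]; omega

/-- Since `0.00111⋯`, `0.0100111⋯` and `0.01010111⋯` in binary are at most `11 / 32`, a pattern at
position `k` bounds the fractional part of `2 ^ k √2`. -/
lemma fract_lt_of_goodAt {k : ℕ} (h : GoodAt bword k) :
    (2 : ℝ) ^ k * √2 < ⌊(2 : ℝ) ^ k * √2⌋ + 11 / 32 := by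
  have f1 := floor_succ k
  have f2 := floor_succ (k + 1)
  have f3 := floor_succ (k + 2)
  have f4 := floor_succ (k + 3)
  have f5 := floor_succ (k + 4)
  have hlt := Int.lt_floor_add_one ((2 : ℝ) ^ (k + 5) * √2)
  have hle : ⌊(2 : ℝ) ^ (k + 5) * √2⌋ + 1 ≤ 32 * ⌊(2 : ℝ) ^ k * √2⌋ + 11 := by
    obtain ⟨h0, h1 | ⟨h1, h2, h3 | ⟨h3, h4⟩⟩⟩ := h <;>
      simp only [*, Bool.false_eq_true, if_false, if_true] at f1 f2 f3 f4 f5 ⊢ <;>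
      (try split_ifs at *) <;> omega
  have hle' : ((⌊(2 : ℝ) ^ (k + 5) * √2⌋ : ℤ) : ℝ) + 1 ≤ 32 * ⌊(2 : ℝ) ^ k * √2⌋ + 11 := by
    exact_mod_cast hle
  have e : (2 : ℝ) ^ (k + 5) * √2 = 32 * (2 ^ k * √2) := by ring
  linarith

lemma undesirable_of_goodAt {k : ℕ} (h : GoodAt bword k) : Undesirable (k + 2) := by
  have hf := fract_lt_of_goodAt h
  have hle := Int.floor_le ((2 : ℝ) ^ k * √2)
  have hpos : 0 ≤ ⌊(2 : ℝ) ^ k * √2⌋ := Int.floor_nonneg.2 (by positivity)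
  obtain ⟨a, ha⟩ := Int.eq_ofNat_of_zero_le hpos
  rw [ha] at hf hle
  simp only [Int.cast_natCast] at hf hle
  have hs : √(2 : ℝ) ^ 2 = 2 := Real.sq_sqrt (by norm_num)
  have hs0 : 0 ≤ √(2 : ℝ) := Real.sqrt_nonneg 2
  have hs1 : √(2 : ℝ) * 11 < 16 := by nlinarith
  have hp : (0 : ℝ) < 2 ^ k := by positivity
  have ha0 : (0 : ℝ) ≤ a := Nat.cast_nonneg a
  have hzz : ((2 : ℝ) ^ k * √2) ^ 2 = 2 * (2 ^ k * 2 ^ k) := by rw [mul_pow, hs]; ring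
  have up : a * a ≤ 2 * (2 ^ k * 2 ^ k) := by
    have : (a * a : ℝ) ≤ 2 * (2 ^ k * 2 ^ k) := by rw [← hzz]; nlinarith
    exact_mod_cast this
  -- `z ^ 2 - a ^ 2 = (z - a) (z + a) ≤ (11 / 32) (2 z) < 2 ^ k`, where `z = 2 ^ k √2`
  have low : 2 * (2 ^ k * 2 ^ k) < a * a + 2 ^ k := by
    have h2 : ((2 : ℝ) ^ k * √2) * 11 < 2 ^ k * 16 := by nlinarith
    have : (2 * (2 ^ k * 2 ^ k) : ℝ) < a * a + 2 ^ k := by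
      rw [← hzz]
      generalize (2 : ℝ) ^ k * √2 = z at *
      nlinarith [mul_le_mul_of_nonneg_right (sub_left_le_of_le_add hf.le : z - a ≤ 11 / 32)
        (by linarith : 0 ≤ z + a)]
    exact_mod_cast this
  have e1 : (2 : ℕ) ^ (k + 1) = 2 * 2 ^ k := by ring
  have e2 : (2 : ℕ) ^ (k + 2) = 4 * 2 ^ k := by ring
  have hq : 0 < 2 ^ k := Nat.two_pow_pos k
  have hL : k + 2 - 1 = k + 1 := by omega
  refine ⟨2 ^ (k + 1) + a, ?_, ?_⟩
  · rw [Finset.mem_Icc, e1, e2]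
    generalize 2 ^ k = q at *
    have : a < 2 * q := by nlinarith
    omega
  · rw [Ln, hL, Nat.add_sub_cancel, e1, e2]
    generalize 2 ^ k = q at *
    have haq : a < 2 * q := by nlinarith
    obtain ⟨c, hc⟩ := Nat.exists_eq_add_of_lt haq
    have hsub : 4 * q - (2 * q + a) = c + 1 := by omega
    have hprod : (2 * q + a) * (c + 1) + a * a = 4 * (q * q) := by
      have : c + 1 + a = 2 * q := by omega
      zify at this ⊢
      have h' : (a : ℤ) = 2 * q - (c + 1) := by linarith
      rw [h']; ring
    rw [hsub]
    apply Nat.div_eq_of_lt_le <;> nlinarith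

lemma card_goodAt_le (N : ℕ) :
    ((Finset.range N).filter (GoodAt bword)).card ≤ numUndesirable N + 1 := by
  have h : ((Finset.range (N - 1)).filter (GoodAt bword)).card ≤ numUndesirable N := by
    refine Finset.card_le_card_of_injOn (fun k => k + 2) ?_ (fun a _ b _ hab => by simpa using hab)
    intro k hk
    simp only [Finset.coe_filter, Finset.mem_range, Set.mem_ofPred_eq, Finset.mem_Icc] at hk ⊢
    exact ⟨by omega, undesirable_of_goodAt hk.2⟩
  rcases N with _ | N
  · simp
  · rw [Nat.add_sub_cancel] at h
    rw [Finset.range_add_one, Finset.filter_insert]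
    split_ifs
    · exact (Finset.card_insert_le _ _).trans (by omega)
    · omega

lemma five_Zcount_le (N : ℕ) :
    5 * Zcount (prefixWord bword N) ≤ 3 * numUndesirable N + 2 * N + 7 := by
  have h1 := five_zeros_le bword N
  have h2 := card_goodAt_le N
  rw [Zcount_prefixWord]
  omega

lemma numUndesirable_div_le_one (N : ℕ) : (numUndesirable N : ℝ) / N ≤ 1 := by
  refine div_le_one_of_le₀ ?_ (Nat.cast_nonneg N)
  have : numUndesirable N ≤ N := (Finset.card_filter_le _ _).trans (by simp)
  exact_mod_cast this

lemma limsup_bound :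
    (5 * rsup bword - 2) / 3 ≤ limsup (fun N : ℕ => (numUndesirable N : ℝ) / N) atTop := by
  refine le_of_forall_lt fun a ha => ?_
  obtain ⟨c, hac, hc⟩ := exists_between ha
  obtain ⟨c', hcc', hc'⟩ := exists_between hc
  have hfreq : ∃ᶠ N : ℕ in atTop,
      (3 * c' + 2) / 5 < (Zcount (prefixWord bword N) : ℝ) / N := by
    refine frequently_lt_of_lt_limsup (isCoboundedUnder_le_of_le atTop (x := 0) fun N => ?_) ?_
    · positivity
    · change _ < rsup bword
      linarith
  have hev : ∀ᶠ N : ℕ in atTop, (7 : ℝ) / N < 3 * (c' - c) :=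
    (tendsto_const_div_atTop_nhds_zero_nat 7).eventually_lt_const (by linarith)
  refine hac.trans_le (le_limsup_of_frequently_le ?_
    (isBoundedUnder_of ⟨1, numUndesirable_div_le_one⟩))
  refine (hfreq.and_eventually (hev.and (eventually_gt_atTop 0))).mono ?_
  rintro N ⟨hz, hN, hN0⟩
  have hN0' : (0 : ℝ) < N := by exact_mod_cast hN0
  have key : (5 * Zcount (prefixWord bword N) : ℝ) ≤ 3 * numUndesirable N + 2 * N + 7 := by
    exact_mod_cast five_Zcount_le N
  rw [lt_div_iff₀ hN0'] at hz
  rw [div_lt_iff₀ hN0'] at hN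
  rw [le_div_iff₀ hN0']
  nlinarith

theorem stmt_11 :
    (5 * rsup bword - 2) / 3 ≤
      limsup (fun N : ℕ => (numUndesirable N : ℝ) / N) atTop ∧
    (rsup bword > 2 / 5 → {n : ℕ | 2 ≤ n ∧ Undesirable n}.Infinite) := by
  refine ⟨limsup_bound, fun hr hfin => ?_⟩
  have hle : ∀ N, numUndesirable N ≤ hfin.toFinset.card := fun N =>
    Finset.card_le_card fun n hn => by
      simp only [Finset.mem_filter, Finset.mem_Icc] at hn
      simpa using ⟨hn.1.1, hn.2⟩
  have hlim : Tendsto (fun N : ℕ => (numUndesirable N : ℝ) / N) atTop (nhds 0) := by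
    refine squeeze_zero (fun N => by positivity) (fun N => ?_)
      (tendsto_const_div_atTop_nhds_zero_nat (hfin.toFinset.card : ℝ))
    gcongr
    exact hle N
  have h := limsup_bound
  rw [hlim.limsup_eq] at h
  linarith
end

section
/- Let p ≥ 2 be an integer, let v be a finite binary word that does not contain 0011 as a contiguous subword and whose last letter (if v is nonempty) is not 0, and let v' be any finite binary word. Then |P(v · 0110^{p−1} · v')| ≤ |P(v · 0^p 11 · v')|, where 0^k denotes a block of k zeroes and · denotes concatenation. -/
/-!
`|P(w)|` is the number of suffixes of `w` that start with one of `00`, `0100`, `01010`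
(`Pcount_cons`), so the two words can be compared suffix by suffix.

For suffixes starting inside `v`: the part beyond `v` of a pattern crossing the end of `v` is a
proper nonempty suffix of the pattern, and the only such suffix that is also a prefix of
`0110⋯` is the single letter `0`. That letter follows `v` in the other word as well, so every
occurrence survives (`StartsPat.append_mono`).

For the remaining suffixes: `0^p 11 v'` has `p - 1` occurrences of `00` besides those in `v'`, while
`011 0^{p-1} v'` has `p - 2` of them besides those in `0 v'` (`Pcount_replicate`), and
`|P(0 v')| ≤ |P(v')| + 1`.
-/

open Filter

/-- The word starts with one of the patterns `00`, `0100`, `01010`. -/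
def StartsPat (w : List Bool) : Prop :=
  [false, false] <+: w ∨ [false, true, false, false] <+: w ∨
    [false, true, false, true, false] <+: w

instance : DecidablePred StartsPat := fun w => by unfold StartsPat; infer_instance

theorem patternAt_add_two (w : List Bool) (j : ℕ) :
    patternAt w (j + 2) ↔ StartsPat (w.drop j) := by
  simp [patternAt, StartsPat]

theorem Pcount_cons_eq_count (a : Bool) (u : List Bool) :
    Pcount (a :: u) = Nat.count (fun j => StartsPat ((a :: u).drop j)) u.length := by
  have h0 : ¬ patternAt (a :: u) 0 := by simp [patternAt]
  have h1 : ¬ patternAt (a :: u) (0 + 1) := by simp [patternAt]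
  rw [Pcount, Pset, ← Nat.count_eq_card_filter_range, List.length_cons, Nat.count_succ',
    Nat.count_succ', if_neg h0, if_neg h1]
  simp only [add_zero, add_assoc, Nat.reduceAdd, patternAt_add_two]

/-- Prepending a letter creates at most one occurrence, the one starting at that letter. -/
theorem Pcount_cons (a : Bool) (w : List Bool) :
    Pcount (a :: w) = Pcount w + if StartsPat (a :: w) then 1 else 0 := by
  cases w with
  | nil => cases a <;> decide
  | cons b u =>
    rw [Pcount_cons_eq_count, Pcount_cons_eq_count, List.length_cons, Nat.count_succ']
    simp

/-- A pattern starting in `v` reaches at most one letter past the end of `v` when `011` follows.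
Patterns have length at most five, so it suffices to unfold the first five letters of `v`. -/
theorem StartsPat.append_mono (v x y : List Bool) (hv : v ≠ [])
    (h : StartsPat (v ++ false :: true :: true :: x)) : StartsPat (v ++ false :: y) := by
  rcases v with _ | ⟨a, _ | ⟨b, _ | ⟨c, _ | ⟨d, _ | ⟨e, v⟩⟩⟩⟩⟩ <;>
    simp_all [StartsPat, List.cons_prefix_cons]

theorem Pcount_append_mono (v x y : List Bool)
    (h : Pcount (false :: true :: true :: x) ≤ Pcount (false :: y)) :
    Pcount (v ++ false :: true :: true :: x) ≤ Pcount (v ++ false :: y) := by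
  induction v with
  | nil => exact h
  | cons a v ih =>
    have := StartsPat.append_mono (a :: v) x y (by simp)
    simp only [List.cons_append] at this ⊢
    rw [Pcount_cons, Pcount_cons a (v ++ false :: y)]
    split_ifs <;> first | omega | tauto

theorem Pcount_true_cons (w : List Bool) : Pcount (true :: w) = Pcount w := by
  rw [Pcount_cons, if_neg (by simp [StartsPat, List.cons_prefix_cons]), add_zero]

theorem Pcount_zero_one_one (w : List Bool) :
    Pcount (false :: true :: true :: w) = Pcount w := by
  rw [Pcount_cons, if_neg (by simp [StartsPat, List.cons_prefix_cons]), add_zero,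
    Pcount_true_cons, Pcount_true_cons]

theorem Pcount_replicate (n : ℕ) (w : List Bool) :
    Pcount (List.replicate n false ++ false :: w) = n + Pcount (false :: w) := by
  induction n with
  | zero => simp
  | succ n ih =>
    rw [List.replicate_succ, List.cons_append, Pcount_cons, ih, if_pos]
    · omega
    · cases n <;> simp [StartsPat, List.replicate_succ, List.cons_prefix_cons]

theorem stmt_15 (p : ℕ) (hp : 2 ≤ p) (v v' : List Bool)
    (h0011 : ¬ ([false, false, true, true] <:+: v))
    (hlast : v.getLast? ≠ some false) :
    Pcount (v ++ [false, true, true] ++ List.replicate (p - 1) false ++ v') ≤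
      Pcount (v ++ List.replicate p false ++ [true, true] ++ v') := by
  obtain ⟨n, rfl⟩ := Nat.exists_eq_add_of_le' hp
  have hL : v ++ [false, true, true] ++ List.replicate (n + 2 - 1) false ++ v' =
      v ++ false :: true :: true :: (List.replicate n false ++ false :: v') := by
    rw [show n + 2 - 1 = n + 1 by omega, List.replicate_succ']
    simp
  have hR : v ++ List.replicate (n + 2) false ++ [true, true] ++ v' =
      v ++ false :: (List.replicate n false ++ false :: true :: true :: v') := by
    rw [List.replicate_succ, List.replicate_succ']
    simp
  rw [hL, hR]
  apply Pcount_append_mono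
  have hcount := Pcount_replicate (n + 1) (true :: true :: v')
  rw [List.replicate_succ, List.cons_append, Pcount_zero_one_one] at hcount
  rw [hcount, Pcount_zero_one_one, Pcount_replicate, Pcount_cons]
  split_ifs <;> omega
end
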